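/- Let Y be an arbitrary set, let v : Y → ℝᵐ be a map, let A ⊆ Y, let u : A → ℝᵐ satisfy ‖u(x) − u(y)‖ ≤ ‖v(x) − v(y)‖ for all x, y ∈ A, and let δ ≥ 0 satisfy ‖v(x) − u(x)‖ ≤ δ for all x ∈ A. Then there exists ũ : Y → ℝᵐ with ũ(x) = u(x) for all x ∈ A, ‖ũ(x) − ũ(y)‖ ≤ ‖v(x) − v(y)‖ for all x, y ∈ Y, and ‖v(x) − ũ(x)‖ ≤ δ for all x ∈ Y. -/

import Mathlib

/-!
By Zorn's lemma it suffices to extend `u` to one more point `z`, that is, to find a common point of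
the closed ball of radius `δ` about `v z` and the closed balls of radius `‖v z - v x‖` about `u x`.
In a Hilbert space closed balls are weakly compact, so only finitely many `x` matter.
Finitely many closed balls meet as soon as every convex combination `∑ lᵢ cᵢ` of their centres
satisfies `∑ lᵢ (‖cᵢ‖² - rᵢ²) ≤ ‖∑ lᵢ cᵢ‖²`: a convex combination maximising the difference of the
two sides is a common point, by the first-order condition. For the balls above, this inequality
follows by comparing the weighted variances of `u` and `v` and the weighted means of `u` and `v`.
-/

open Metric Set

theorem mul_sq_le_of_le_add {a b L μ δ : ℝ} (hL : 0 ≤ L) (hμ : 0 ≤ μ) (hμL : μ + L = 1)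
    (ha : 0 ≤ a) (hab : a ≤ b + L * δ) : μ * a ^ 2 ≤ b ^ 2 + μ * L * δ ^ 2 := by
  obtain rfl : L = 1 - μ := by linarith
  calc μ * a ^ 2 ≤ μ * (b + (1 - μ) * δ) ^ 2 := by gcongr
    _ = b ^ 2 + μ * (1 - μ) * δ ^ 2 - (1 - μ) * (b - μ * δ) ^ 2 := by ring
    _ ≤ b ^ 2 + μ * (1 - μ) * δ ^ 2 := sub_le_self _ (by positivity)

section InnerProductSpace

variable {E : Type*} [NormedAddCommGroup E] [InnerProductSpace ℝ E]

theorem snd_sub_le_two_mul_inner_of_isMaxOn {K : Set (E × ℝ)} (hK : Convex ℝ K) {a p : E × ℝ}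
    (ha : a ∈ K) (hp : p ∈ K) (hmax : IsMaxOn (fun x ↦ x.2 - ‖x.1‖ ^ 2) K a) :
    p.2 - a.2 ≤ 2 * inner ℝ a.1 (p.1 - a.1) := by
  have hderiv := (hasFDerivAt_snd (𝕜 := ℝ) (p := a)).sub
    (hasFDerivAt_fst (𝕜 := ℝ) (p := a)).norm_sq
  have hdir : p - a ∈ posTangentConeAt K a :=
    sub_mem_posTangentConeAt_of_segment_subset (hK.segment_subset ha hp)
  simpa using hmax.localize.hasFDerivWithinAt_nonpos hderiv.hasFDerivWithinAt hdir

section FiniteSums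

variable {ι : Type*} [Fintype ι]

theorem exists_forall_norm_sub_le_of_forall_stdSimplex (c : ι → E) {r : ι → ℝ}
    (hr : ∀ i, 0 ≤ r i)
    (hcr : ∀ l ∈ stdSimplex ℝ ι, ∑ i, l i * (‖c i‖ ^ 2 - r i ^ 2) ≤ ‖∑ i, l i • c i‖ ^ 2) :
    ∃ w, ∀ i, ‖w - c i‖ ≤ r i := by
  classical
  cases isEmpty_or_nonempty ι
  · exact ⟨0, isEmptyElim⟩
  let point (i : ι) : E × ℝ := (c i, ‖c i‖ ^ 2 - r i ^ 2)
  let combo : (ι → ℝ) →ₗ[ℝ] E × ℝ := Fintype.linearCombination ℝ point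
  let K : Set (E × ℝ) := combo '' stdSimplex ℝ ι
  have hK : Convex ℝ K := (convex_stdSimplex ℝ ι).linear_image combo
  have point_mem (i : ι) : point i ∈ K :=
    ⟨Pi.single i 1, single_mem_stdSimplex ℝ i, by simp [combo]⟩
  have hKcompact : IsCompact K :=
    (isCompact_stdSimplex ℝ ι).image combo.continuous_of_finiteDimensional
  obtain ⟨a, ha, hmax⟩ := hKcompact.exists_isMaxOn (f := fun x ↦ x.2 - ‖x.1‖ ^ 2)
    ⟨_, point_mem (Classical.arbitrary ι)⟩ (by fun_prop)
  have ha_le : a.2 ≤ ‖a.1‖ ^ 2 := by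
    obtain ⟨l, hl, rfl⟩ := ha
    simpa [combo, point, Fintype.linearCombination_apply, Prod.fst_sum, Prod.snd_sum] using hcr l hl
  refine ⟨a.1, fun i ↦ le_of_sq_le_sq ?_ (hr i)⟩
  have hfirst : ‖c i‖ ^ 2 - r i ^ 2 - a.2 ≤ 2 * inner ℝ a.1 (c i - a.1) :=
    snd_sub_le_two_mul_inner_of_isMaxOn hK ha (point_mem i) hmax
  rw [inner_sub_right, real_inner_self_eq_norm_sq] at hfirst
  rw [norm_sub_sq_real]
  linarith

theorem norm_sum_smul_sq (k : ι → ℝ) (f : ι → E) :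
    ‖∑ i, k i • f i‖ ^ 2 = ∑ i, ∑ j, k i * k j * inner ℝ (f i) (f j) := by
  rw [← real_inner_self_eq_norm_sq, sum_inner]
  simp only [inner_sum, real_inner_smul_left, real_inner_smul_right, mul_assoc, mul_left_comm]

theorem sum_sum_mul_norm_sub_sq (k : ι → ℝ) (f : ι → E) :
    ∑ i, ∑ j, k i * k j * ‖f i - f j‖ ^ 2
      = 2 * ((∑ i, k i) * ∑ i, k i * ‖f i‖ ^ 2 - ‖∑ i, k i • f i‖ ^ 2) := by
  have hright : (∑ i, k i) * ∑ i, k i * ‖f i‖ ^ 2 = ∑ i, ∑ j, k i * k j * ‖f j‖ ^ 2 := by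
    simp only [Finset.sum_mul_sum, mul_assoc]
  have hleft : ∑ i, ∑ j, k i * k j * ‖f j‖ ^ 2 = ∑ i, ∑ j, k i * k j * ‖f i‖ ^ 2 := by
    rw [Finset.sum_comm]
    simp only [mul_comm (k _) (k _)]
  calc ∑ i, ∑ j, k i * k j * ‖f i - f j‖ ^ 2
      = ∑ i, ∑ j, k i * k j * ‖f i‖ ^ 2 + ∑ i, ∑ j, k i * k j * ‖f j‖ ^ 2
          - 2 * ∑ i, ∑ j, k i * k j * inner ℝ (f i) (f j) := by
        simp only [Finset.mul_sum, ← Finset.sum_add_distrib, ← Finset.sum_sub_distrib,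
          norm_sub_sq_real]
        congr! 2
        ring
    _ = 2 * ((∑ i, k i) * ∑ i, k i * ‖f i‖ ^ 2 - ‖∑ i, k i • f i‖ ^ 2) := by
        rw [norm_sum_smul_sq, hright, hleft]
        ring

variable {k : ι → ℝ} {f q : ι → E} {δ : ℝ}

theorem sum_mul_sum_norm_sq_sub_le (hk : ∀ i, 0 ≤ k i)
    (hfq : ∀ i j, ‖f i - f j‖ ≤ ‖q i - q j‖) :
    (∑ i, k i) * ∑ i, k i * ‖f i‖ ^ 2 - ‖∑ i, k i • f i‖ ^ 2
      ≤ (∑ i, k i) * ∑ i, k i * ‖q i‖ ^ 2 - ‖∑ i, k i • q i‖ ^ 2 := by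
  have hle : ∑ i, ∑ j, k i * k j * ‖f i - f j‖ ^ 2 ≤ ∑ i, ∑ j, k i * k j * ‖q i - q j‖ ^ 2 := by
    gcongr with i _ j _
    · exact mul_nonneg (hk i) (hk j)
    · exact hfq i j
  rw [sum_sum_mul_norm_sub_sq, sum_sum_mul_norm_sub_sq] at hle
  linarith

theorem norm_sum_smul_le_add (hk : ∀ i, 0 ≤ k i) (hclose : ∀ i, ‖q i - f i‖ ≤ δ) :
    ‖∑ i, k i • f i‖ ≤ ‖∑ i, k i • q i‖ + (∑ i, k i) * δ := by
  have hdist : ‖∑ i, k i • q i - ∑ i, k i • f i‖ ≤ (∑ i, k i) * δ := by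
    simp only [← Finset.sum_sub_distrib, ← smul_sub, Finset.sum_mul]
    refine norm_sum_le_of_le _ fun i _ ↦ ?_
    rw [norm_smul_of_nonneg (hk i)]
    exact mul_le_mul_of_nonneg_left (hclose i) (hk i)
  linarith [norm_le_norm_add_norm_sub (∑ i, k i • q i) (∑ i, k i • f i)]

theorem sum_mul_norm_sq_sub_le (hk : ∀ i, 0 ≤ k i) {μ : ℝ} (hμ : 0 ≤ μ)
    (hsum : μ + ∑ i, k i = 1) (hfq : ∀ i j, ‖f i - f j‖ ≤ ‖q i - q j‖)
    (hclose : ∀ i, ‖q i - f i‖ ≤ δ) :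
    ∑ i, k i * (‖f i‖ ^ 2 - ‖q i‖ ^ 2) ≤ ‖∑ i, k i • f i‖ ^ 2 + μ * δ ^ 2 := by
  have hL : 0 ≤ ∑ i, k i := Finset.sum_nonneg fun i _ ↦ hk i
  rcases hL.eq_or_lt with hzero | hpos
  · have hk0 : k = 0 := (Fintype.sum_eq_zero_iff_of_nonneg hk).1 hzero.symm
    simp only [hk0, Pi.zero_apply, zero_mul, Finset.sum_const_zero]
    positivity
  have hvar := sum_mul_sum_norm_sq_sub_le hk hfq
  have hmean : μ * ‖∑ i, k i • f i‖ ^ 2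
      ≤ ‖∑ i, k i • q i‖ ^ 2 + μ * (∑ i, k i) * δ ^ 2 :=
    mul_sq_le_of_le_add hL hμ hsum (norm_nonneg _) (norm_sum_smul_le_add hk hclose)
  refine le_of_mul_le_mul_left ?_ hpos
  calc (∑ i, k i) * ∑ i, k i * (‖f i‖ ^ 2 - ‖q i‖ ^ 2)
      ≤ ‖∑ i, k i • f i‖ ^ 2 - ‖∑ i, k i • q i‖ ^ 2 := by
        simp only [mul_sub, Finset.sum_sub_distrib]
        linarith
    _ ≤ (1 - μ) * ‖∑ i, k i • f i‖ ^ 2 + μ * (∑ i, k i) * δ ^ 2 := by linarith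
    _ = (∑ i, k i) * (‖∑ i, k i • f i‖ ^ 2 + μ * δ ^ 2) := by
        rw [← hsum]
        ring

end FiniteSums

theorem exists_norm_le_forall_norm_sub_le {ι : Type*} [Finite ι] {f q : ι → E} {δ : ℝ}
    (hδ : 0 ≤ δ) (hfq : ∀ i j, ‖f i - f j‖ ≤ ‖q i - q j‖) (hclose : ∀ i, ‖q i - f i‖ ≤ δ) :
    ∃ w : E, ‖w‖ ≤ δ ∧ ∀ i, ‖w - f i‖ ≤ ‖q i‖ := by
  cases nonempty_fintype ι
  let centre (o : Option ι) : E := o.elim 0 f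
  let radius (o : Option ι) : ℝ := o.elim δ fun i ↦ ‖q i‖
  obtain ⟨w, hw⟩ : ∃ w, ∀ o, ‖w - centre o‖ ≤ radius o := by
    refine exists_forall_norm_sub_le_of_forall_stdSimplex centre
      (Option.forall.2 ⟨hδ, fun i ↦ norm_nonneg (q i)⟩) fun l ⟨hl, hsum⟩ ↦ ?_
    rw [Fintype.sum_option] at hsum
    have hle := sum_mul_norm_sq_sub_le (fun i ↦ hl (some i)) (hl none) hsum hfq hclose
    simp only [centre, radius, Fintype.sum_option, Option.elim, norm_zero, smul_zero, zero_add]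
    linarith
  exact ⟨w, by simpa [centre, radius] using hw none, fun i ↦ hw (some i)⟩

theorem nonempty_closedBall_inter_iInter_closedBall [CompleteSpace E] {ι : Type*} (c₀ : E) (r₀ : ℝ)
    (c : ι → E) (r : ι → ℝ)
    (hfin : ∀ s : Finset ι, (closedBall c₀ r₀ ∩ ⋂ i ∈ s, closedBall (c i) (r i)).Nonempty) :
    (closedBall c₀ r₀ ∩ ⋂ i, closedBall (c i) (r i)).Nonempty := by
  let Φ : E → WeakDual ℝ E := fun x ↦ StrongDual.toWeakDual (InnerProductSpace.toDual ℝ E x)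
  let weakBall (x : E) (ρ : ℝ) : Set (WeakDual ℝ E) :=
    WeakDual.toStrongDual ⁻¹' closedBall (InnerProductSpace.toDual ℝ E x) ρ
  have mem_weakBall (x y : E) (ρ : ℝ) : Φ y ∈ weakBall x ρ ↔ y ∈ closedBall x ρ := by
    simp [Φ, weakBall]
  have hΦ : Function.Surjective Φ :=
    StrongDual.toWeakDual.surjective.comp (InnerProductSpace.toDual ℝ E).surjective
  have hcompact : IsCompact (weakBall c₀ r₀) := WeakDual.isCompact_closedBall _ r₀
  obtain ⟨ξ, hξ⟩ := hcompact.inter_iInter_nonempty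
    (fun i ↦ weakBall (c i) (r i)) (fun i ↦ WeakDual.isClosed_closedBall _ _) fun s ↦ by
      obtain ⟨y, hy⟩ := hfin s
      exact ⟨Φ y, by simpa only [mem_inter_iff, mem_iInter, mem_weakBall] using hy⟩
  obtain ⟨y, rfl⟩ := hΦ ξ
  exact ⟨y, by simpa only [mem_inter_iff, mem_iInter, mem_weakBall] using hξ⟩

theorem exists_norm_sub_le_forall_norm_sub_le [CompleteSpace E] {ι : Type*} {f q : ι → E} {δ : ℝ}
    (hδ : 0 ≤ δ) (hfq : ∀ i j, ‖f i - f j‖ ≤ ‖q i - q j‖) (hclose : ∀ i, ‖q i - f i‖ ≤ δ) (z : E) :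
    ∃ w, ‖z - w‖ ≤ δ ∧ ∀ i, ‖w - f i‖ ≤ ‖z - q i‖ := by
  obtain ⟨w, hw⟩ := nonempty_closedBall_inter_iInter_closedBall z δ f (fun i ↦ ‖z - q i‖) fun s ↦ by
    obtain ⟨w, hwδ, hwf⟩ := exists_norm_le_forall_norm_sub_le
      (f := fun i : s ↦ f i - z) (q := fun i : s ↦ q i - z) hδ
      (fun i j ↦ by simpa only [sub_sub_sub_cancel_right] using hfq i j)
      (fun i ↦ by simpa only [sub_sub_sub_cancel_right] using hclose i)
    refine ⟨w + z, by simpa using hwδ, mem_iInter₂.2 fun i hi ↦ ?_⟩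
    simpa only [mem_closedBall_iff_norm, norm_sub_rev z, sub_sub_eq_add_sub] using hwf ⟨i, hi⟩
  simp only [mem_inter_iff, mem_iInter, mem_closedBall_iff_norm, norm_sub_rev w z] at hw
  exact ⟨w, hw⟩

end InnerProductSpace

section Extension

variable {Y E : Type*} [NormedAddCommGroup E] {v : Y → E} {δ : ℝ}

/-- The set `G` of pairs `(x, u x)` behaves like the graph of a partial map `u` on `Y` that stays
within `δ` of `v` and whose increments are majorised by those of `v`. Zorn's lemma is applied to
these sets ordered by inclusion. Single-valuedness is encoded in `norm_sub_le`. -/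
structure IsMajorisedGraph (v : Y → E) (δ : ℝ) (G : Set (Y × E)) : Prop where
  norm_sub_le : ∀ p ∈ G, ∀ p' ∈ G, ‖p.2 - p'.2‖ ≤ ‖v p.1 - v p'.1‖
  close : ∀ p ∈ G, ‖v p.1 - p.2‖ ≤ δ

namespace IsMajorisedGraph

variable {G : Set (Y × E)}

theorem eq_of_mem (hG : IsMajorisedGraph v δ G) {x : Y} {w w' : E} (hw : (x, w) ∈ G)
    (hw' : (x, w') ∈ G) : w = w' := by
  simpa [sub_eq_zero] using hG.norm_sub_le _ hw _ hw'

theorem sUnion {C : Set (Set (Y × E))} (hC : ∀ G ∈ C, IsMajorisedGraph v δ G)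
    (hchain : IsChain (· ⊆ ·) C) : IsMajorisedGraph v δ (⋃₀ C) where
  norm_sub_le := by
    rintro p ⟨G, hG, hp⟩ p' ⟨G', hG', hp'⟩
    rcases hchain.total hG hG' with hsub | hsub
    · exact (hC G' hG').norm_sub_le p (hsub hp) p' hp'
    · exact (hC G hG).norm_sub_le p hp p' (hsub hp')
  close := fun p ⟨G, hG, hp⟩ ↦ (hC G hG).close p hp

theorem insert (hG : IsMajorisedGraph v δ G) {x : Y} {w : E} (hw : ‖v x - w‖ ≤ δ)
    (hwG : ∀ p ∈ G, ‖w - p.2‖ ≤ ‖v x - v p.1‖) : IsMajorisedGraph v δ (insert (x, w) G) where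
  norm_sub_le := by
    rintro p (rfl | hp) p' (rfl | hp')
    · simp
    · exact hwG p' hp'
    · simpa only [norm_sub_rev] using hwG p hp
    · exact hG.norm_sub_le p hp p' hp'
  close := by
    rintro p (rfl | hp)
    · exact hw
    · exact hG.close p hp

theorem exists_subset_maximal (hG : IsMajorisedGraph v δ G) :
    ∃ M, G ⊆ M ∧ Maximal (IsMajorisedGraph v δ) M :=
  zorn_subset_nonempty {G | IsMajorisedGraph v δ G}
    (fun C hC hchain _ ↦ ⟨⋃₀ C, sUnion hC hchain, fun _ ↦ subset_sUnion_of_mem⟩) G hG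

theorem exists_mem_of_maximal [InnerProductSpace ℝ E] [CompleteSpace E] (hδ : 0 ≤ δ)
    (hG : Maximal (IsMajorisedGraph v δ) G) (x : Y) : ∃ w, (x, w) ∈ G := by
  obtain ⟨w, hwδ, hwG⟩ := exists_norm_sub_le_forall_norm_sub_le
    (f := fun p : G ↦ p.1.2) (q := fun p : G ↦ v p.1.1) hδ
    (fun p p' ↦ hG.prop.norm_sub_le p p.2 p' p'.2) (fun p ↦ hG.prop.close p p.2) (v x)
  have hinsert := hG.prop.insert hwδ fun p hp ↦ hwG ⟨p, hp⟩
  exact ⟨w, hG.le_of_ge hinsert (subset_insert _ _) (mem_insert _ _)⟩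

end IsMajorisedGraph

theorem isMajorisedGraph_image {A : Set Y} {u : Y → E}
    (hu : ∀ x ∈ A, ∀ y ∈ A, ‖u x - u y‖ ≤ ‖v x - v y‖) (hclose : ∀ x ∈ A, ‖v x - u x‖ ≤ δ) :
    IsMajorisedGraph v δ ((fun x ↦ (x, u x)) '' A) where
  norm_sub_le := by simpa only [forall_mem_image] using hu
  close := by simpa only [forall_mem_image] using hclose

end Extension

theorem stmt_16_general {E : Type*} [NormedAddCommGroup E] [InnerProductSpace ℝ E] [CompleteSpace E]
    {Y : Type*} (v : Y → E) (A : Set Y) (u : Y → E)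
    (hu : ∀ x ∈ A, ∀ y ∈ A, ‖u x - u y‖ ≤ ‖v x - v y‖)
    (δ : ℝ) (hδ : 0 ≤ δ) (hclose : ∀ x ∈ A, ‖v x - u x‖ ≤ δ) :
    ∃ uext : Y → E,
      (∀ x ∈ A, uext x = u x) ∧
      (∀ x y : Y, ‖uext x - uext y‖ ≤ ‖v x - v y‖) ∧
      (∀ x : Y, ‖v x - uext x‖ ≤ δ) := by
  obtain ⟨G, hAG, hG⟩ := (isMajorisedGraph_image hu hclose).exists_subset_maximal
  choose uext huext using IsMajorisedGraph.exists_mem_of_maximal hδ hG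
  exact ⟨uext, fun x hx ↦ hG.prop.eq_of_mem (huext x) (hAG (mem_image_of_mem _ hx)),
    fun x y ↦ hG.prop.norm_sub_le _ (huext x) _ (huext y), fun x ↦ hG.prop.close _ (huext x)⟩

theorem stmt_16 (m : ℕ) {Y : Type*} (v : Y → EuclideanSpace ℝ (Fin m))
    (A : Set Y) (u : Y → EuclideanSpace ℝ (Fin m))
    (hu : ∀ x ∈ A, ∀ y ∈ A, ‖u x - u y‖ ≤ ‖v x - v y‖)
    (δ : ℝ) (hδ : 0 ≤ δ) (hclose : ∀ x ∈ A, ‖v x - u x‖ ≤ δ) :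
    ∃ uext : Y → EuclideanSpace ℝ (Fin m),
      (∀ x ∈ A, uext x = u x) ∧
      (∀ x y : Y, ‖uext x - uext y‖ ≤ ‖v x - v y‖) ∧
      (∀ x : Y, ‖v x - uext x‖ ≤ δ) :=
  stmt_16_general v A u hu δ hδ hclose
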